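/- Let n ≥ 2, 0 < α < n, 1 < s ≤ ∞ and 0 < β ≤ 1, and suppose Ω satisfies the L^{s;β}-Dini condition D_{s;β}. Then there is a constant C > 0 such that for every ball B = B(x₀, r), every integer j ≥ 2, and every x ∈ B, (∫_{2^{j+1}B ∖ 2^{j}B} | Ω(x−z)/|x−z|^{n−α} − Ω(x₀−z)/|x₀−z|^{n−α} |^s dz)^{1/s} ≤ C (2^{j}r)^{n/s − (n−α)} [ 2^{−j} + 2^{−jβ} ∫_{|x−x₀|/(2^{j+1}r)}^{|x−x₀|/(2^{j}r)} ω_s(δ)/δ^{1+β} dδ ] (for s = ∞ the left-hand side is the essential supremum over 2^{j+1}B ∖ 2^{j}B and n/s = 0). -/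

import Mathlib

noncomputable section

open MeasureTheory Metric Set
open scoped ENNReal

abbrev En (n : ℕ) : Type := EuclideanSpace ℝ (Fin n)

/-- `Ω` is homogeneous of degree zero. -/
def HomZero {n : ℕ} (Ω : En n → ℝ) : Prop :=
  ∀ t : ℝ, 0 < t → ∀ x : En n, x ≠ 0 → Ω (t • x) = Ω x

/-- Surface measure on the unit sphere `S^{n-1}`. -/
noncomputable def sphereMeasure (n : ℕ) : Measure (sphere (0 : En n) 1) :=
  (volume : Measure (En n)).toSphere

/-- The `L^s(S^{n-1})` norm of `Ω` (essential supremum when `s = ∞`). -/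
noncomputable def sphereLpNorm {n : ℕ} (s : ℝ≥0∞) (Ω : En n → ℝ) : ℝ≥0∞ :=
  eLpNorm (fun x : sphere (0 : En n) 1 => Ω (x : En n)) s (sphereMeasure n)

/-- `‖ρ - I‖ = sup_{x' ∈ S^{n-1}} |ρ x' - x'|`. -/
noncomputable def rotNorm {n : ℕ} (ρ : En n ≃ₗᵢ[ℝ] En n) : ℝ :=
  ⨆ x : sphere (0 : En n) 1, ‖ρ (x : En n) - (x : En n)‖

/-- `ρ ∈ SO(n)`: a linear isometry with determinant one. -/
def IsRotation {n : ℕ} (ρ : En n ≃ₗᵢ[ℝ] En n) : Prop :=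
  LinearMap.det (ρ.toLinearEquiv : En n →ₗ[ℝ] En n) = 1

/-- The integral modulus of continuity `ω_s(δ)` of `Ω` of order `s`
(essential-sup version when `s = ∞`). -/
noncomputable def modCont {n : ℕ} (s : ℝ≥0∞) (Ω : En n → ℝ) (δ : ℝ) : ℝ :=
  (⨆ ρ : {ρ : En n ≃ₗᵢ[ℝ] En n // IsRotation ρ ∧ rotNorm ρ < δ},
    eLpNorm (fun x : sphere (0 : En n) 1 => Ω (ρ.1 (x : En n)) - Ω (x : En n)) s
      (sphereMeasure n)).toReal

/-- The `L^{s;β}`-Dini smoothness condition `D_{s;β}`. -/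
def DiniCond {n : ℕ} (s : ℝ≥0∞) (β : ℝ) (Ω : En n → ℝ) : Prop :=
  HomZero Ω ∧ sphereLpNorm s Ω ≠ ⊤ ∧
    IntegrableOn (fun δ : ℝ => modCont s Ω δ / δ ^ (1 + β)) (Ioo (0 : ℝ) 1)

/-- The homogeneous fractional integral operator `T_{Ω,α}`. -/
noncomputable def T {n : ℕ} (Ω : En n → ℝ) (α : ℝ) (f : En n → ℝ) (x : En n) : ℝ :=
  ∫ y, Ω (x - y) * ‖x - y‖ ^ (α - (n : ℝ)) * f y

/-- Conjugate exponent of `s ∈ (1,∞]`, with `∞' = 1`. -/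
noncomputable def conj (s : ℝ≥0∞) : ℝ := if s = ⊤ then 1 else s.toReal / (s.toReal - 1)

/-- Conjugate exponent of a real exponent `t`. -/
noncomputable def rconj (t : ℝ) : ℝ := t / (t - 1)

/-- A weight: a locally integrable a.e. positive function. -/
def IsWeight {n : ℕ} (ω : En n → ℝ) : Prop :=
  LocallyIntegrable ω volume ∧ ∀ᵐ x : En n, 0 < ω x

/-- The Muckenhoupt–Wheeden class `A(t, ∞)`. -/
def MemArInfty {n : ℕ} (ω : En n → ℝ) (t : ℝ) : Prop :=
  ∃ C > 0, ∀ (x₀ : En n) (r : ℝ), 0 < r →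
    essSup ω (volume.restrict (ball x₀ r)) *
      (⨍ x in ball x₀ r, ω x ^ (-(rconj t))) ^ (1 / rconj t) ≤ C

/-- The Muckenhoupt–Wheeden class `A(u, t)` (with the `ess sup` convention when `u = 1`). -/
def MemArt {n : ℕ} (ω : En n → ℝ) (u t : ℝ) : Prop :=
  ∃ C > 0, ∀ (x₀ : En n) (r : ℝ), 0 < r →
    (⨍ x in ball x₀ r, ω x ^ t) ^ (1 / t) *
      (if u = 1 then essSup (fun x => (ω x)⁻¹) (volume.restrict (ball x₀ r))
       else (⨍ x in ball x₀ r, ω x ^ (-(rconj u))) ^ (1 / rconj u)) ≤ C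

/-- The weighted Lebesgue norm `‖f‖_{L^p(ω^p)}`. -/
noncomputable def wLpNorm {n : ℕ} (p : ℝ) (ω f : En n → ℝ) : ℝ :=
  (∫ x, |f x| ^ p * ω x ^ p) ^ (1 / p)

/-- `f ∈ L^p(ω^p)`. -/
def MemWLp {n : ℕ} (p : ℝ) (ω f : En n → ℝ) : Prop :=
  Measurable f ∧ Integrable (fun x => |f x| ^ p * ω x ^ p)

/-- The set of ball quantities defining the weighted Morrey norm `M^{p,κ}(ω₁, ν)`. -/
def morreySet {n : ℕ} (p κ : ℝ) (ω₁ ν f : En n → ℝ) : Set ℝ :=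
  {c | ∃ (x₀ : En n) (r : ℝ), 0 < r ∧
    c = ((∫ x in ball x₀ r, ν x) ^ (-κ) * ∫ x in ball x₀ r, |f x| ^ p * ω₁ x) ^ (1 / p)}

/-- The weighted Morrey norm `‖f‖_{M^{p,κ}(ω₁, ν)}`. -/
noncomputable def morreyNorm {n : ℕ} (p κ : ℝ) (ω₁ ν f : En n → ℝ) : ℝ :=
  sSup (morreySet p κ ω₁ ν f)

/-- `f ∈ M^{p,κ}(ω₁, ν)`, i.e. `‖f‖_{M^{p,κ}(ω₁,ν)} < ∞`. -/
def MemMorrey {n : ℕ} (p κ : ℝ) (ω₁ ν f : En n → ℝ) : Prop :=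
  Measurable f ∧
  (∀ (x₀ : En n) (r : ℝ), 0 < r → IntegrableOn (fun x => |f x| ^ p * ω₁ x) (ball x₀ r)) ∧
  BddAbove (morreySet p κ ω₁ ν f)
open scoped RealInnerProductSpace in
/-- The reflection in the hyperplane orthogonal to `v`, scaled by `‖v‖ ^ 2`, so that it is
polynomial in `v`. -/
def scaledReflection {n : ℕ} (v w : En n) : En n := ‖v‖ ^ 2 • w - (2 * ⟪v, w⟫) • v

/-- The reflection in the hyperplane orthogonal to `v`. -/
def hyperplaneReflection {n : ℕ} (v : En n) : En n ≃ₗᵢ[ℝ] En n :=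
  (Submodule.span ℝ {v})ᗮ.reflection

/-- The rotation obtained by composing the reflections in the hyperplanes orthogonal to
`e` and `v`. -/
def reflectionRotation {n : ℕ} (e v : En n) : En n ≃ₗᵢ[ℝ] En n :=
  (hyperplaneReflection e).trans (hyperplaneReflection v)

open scoped RealInnerProductSpace in
lemma hyperplaneReflection_apply {n : ℕ} (v w : En n) :
    hyperplaneReflection v w = w - (2 * (⟪v, w⟫ / ‖v‖ ^ 2)) • v := by
  rw [hyperplaneReflection, Submodule.reflection_orthogonal_apply,
    Submodule.reflection_singleton_apply]
  simp [two_smul, two_mul, add_smul]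

lemma hyperplaneReflection_involutive {n : ℕ} (v w : En n) :
    hyperplaneReflection v (hyperplaneReflection v w) = w :=
  Submodule.reflection_reflection _ w

lemma scaledReflection_eq {n : ℕ} {v : En n} (hv : v ≠ 0) (w : En n) :
    scaledReflection v w = ‖v‖ ^ 2 • hyperplaneReflection v w := by
  have : ‖v‖ ^ 2 ≠ 0 := by positivity
  rw [hyperplaneReflection_apply, smul_sub, smul_smul, scaledReflection]
  congr 2
  field_simp

lemma continuous_scaledReflection {n : ℕ} :
    Continuous (fun p : En n × En n => scaledReflection p.1 p.2) := by
  unfold scaledReflection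
  fun_prop

lemma isRotation_reflectionRotation {n : ℕ} {e v : En n} (he : e ≠ 0) (hv : v ≠ 0) :
    IsRotation (reflectionRotation e v) := by
  have hdet : ∀ a : En n, a ≠ 0 →
      LinearMap.det ((hyperplaneReflection a).toLinearEquiv : En n →ₗ[ℝ] En n) = -1 := by
    intro a ha
    have := Submodule.det_reflection (𝕜 := ℝ) ((Submodule.span ℝ {a})ᗮ)
    rw [Submodule.orthogonal_orthogonal, finrank_span_singleton ha, pow_one] at this
    exact this
  have hcomp : ((reflectionRotation e v).toLinearEquiv : En n →ₗ[ℝ] En n)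
      = ((hyperplaneReflection v).toLinearEquiv : En n →ₗ[ℝ] En n) ∘ₗ
        ((hyperplaneReflection e).toLinearEquiv : En n →ₗ[ℝ] En n) := rfl
  rw [IsRotation, hcomp, LinearMap.det_comp, hdet e he, hdet v hv]
  norm_num

open scoped RealInnerProductSpace in
lemma norm_inner_smul_sub_le {n : ℕ} {a b x : En n} (ha : ‖a‖ = 1) (hb : ‖b‖ = 1) :
    ‖⟪a, x⟫ • a - ⟪b, x⟫ • b‖ ≤ 2 * ‖a - b‖ * ‖x‖ := by
  have : ⟪a, x⟫ • a - ⟪b, x⟫ • b = ⟪a - b, x⟫ • a + ⟪b, x⟫ • (a - b) := by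
    rw [inner_sub_left, sub_smul, smul_sub]; abel
  rw [this]
  refine (norm_add_le _ _).trans ?_
  rw [norm_smul, norm_smul, ha]
  have h1 := norm_inner_le_norm (𝕜 := ℝ) (a - b) x
  have h2 := norm_inner_le_norm (𝕜 := ℝ) b x
  rw [hb] at h2
  nlinarith [norm_nonneg (a - b)]

lemma norm_inv_smul_sub_le {n : ℕ} {a b : En n} (ha : a ≠ 0) (hb : b ≠ 0) :
    ‖‖a‖⁻¹ • a - ‖b‖⁻¹ • b‖ ≤ 2 * ‖a - b‖ / ‖b‖ := by
  have h : ‖a‖⁻¹ • a - ‖b‖⁻¹ • b = (‖b‖⁻¹ * (‖b‖ - ‖a‖)) • (‖a‖⁻¹ • a) + ‖b‖⁻¹ • (a - b) := by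
    rw [mul_sub, inv_mul_cancel₀ (norm_ne_zero_iff.2 hb), sub_smul, one_smul, smul_sub,
      mul_smul, smul_smul ‖a‖, mul_inv_cancel₀ (norm_ne_zero_iff.2 ha), one_smul]
    abel
  have hb' : 0 < ‖b‖ := norm_pos_iff.2 hb
  rw [h]
  refine (norm_add_le _ _).trans ?_
  rw [norm_smul, norm_smul, norm_smul, norm_mul, norm_inv, norm_inv, norm_norm, norm_norm,
    inv_mul_cancel₀ (norm_ne_zero_iff.2 ha), mul_one, ← mul_add, inv_mul_eq_div]
  gcongr
  have := abs_norm_sub_norm_le b a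
  rw [norm_sub_rev b a] at this
  rw [Real.norm_eq_abs]
  linarith

open scoped RealInnerProductSpace in
lemma rotNorm_reflectionRotation_le {n : ℕ} {e v : En n} (he : ‖e‖ = 1) (hv : v ≠ 0) :
    rotNorm (reflectionRotation e v) ≤ 8 * ‖v - e‖ := by
  refine Real.iSup_le (fun x => ?_) (by positivity)
  have hx : ‖(x : En n)‖ = 1 := by simp
  have he0 : e ≠ 0 := by rintro rfl; simp at he
  have h1 : ‖reflectionRotation e v x - x‖
      = ‖hyperplaneReflection e x - hyperplaneReflection v x‖ := by
    conv_lhs => rw [← hyperplaneReflection_involutive v (x : En n)]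
    rw [← (hyperplaneReflection v).norm_map (hyperplaneReflection e x - _), map_sub]
    simp [reflectionRotation, hyperplaneReflection_involutive]
  have h2 : ∀ a : En n, a ≠ 0 → hyperplaneReflection a (x : En n)
      = x - (2 : ℝ) • (⟪‖a‖⁻¹ • a, (x : En n)⟫ • (‖a‖⁻¹ • a)) := by
    intro a ha
    rw [hyperplaneReflection_apply, real_inner_smul_left, smul_smul, smul_smul]
    congr 2
    field_simp
  rw [h1, h2 e he0, h2 v hv, sub_sub_sub_cancel_left, ← smul_sub, norm_smul]
  have h3 := norm_inner_smul_sub_le (a := ‖v‖⁻¹ • v) (b := ‖e‖⁻¹ • e) (x := (x : En n))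
    (by rw [norm_smul, norm_inv, norm_norm, inv_mul_cancel₀ (norm_ne_zero_iff.2 hv)])
    (by simp [he])
  have h4 := norm_inv_smul_sub_le hv he0
  rw [hx, mul_one] at h3
  rw [he, div_one] at h4
  rw [he] at h3 ⊢
  norm_num at *
  linarith

open scoped RealInnerProductSpace in
lemma norm_scaledReflection_sub_le {n : ℕ} {v v' w : En n} (hv : ‖v‖ ≤ 2) (hv' : ‖v'‖ ≤ 2)
    (hw : ‖w‖ ≤ 3) :
    ‖scaledReflection v w - scaledReflection v' w‖ ≤ 36 * ‖v - v'‖ := by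
  have h : scaledReflection v w - scaledReflection v' w
      = (‖v‖ ^ 2 - ‖v'‖ ^ 2) • w - (2 * ⟪v - v', w⟫) • v - (2 * ⟪v', w⟫) • (v - v') := by
    simp only [scaledReflection, inner_sub_left, mul_sub, sub_smul, smul_sub]
    abel
  rw [h]
  refine (norm_sub_le _ _).trans ((add_le_add_left (norm_sub_le _ _) _).trans ?_)
  rw [norm_smul, norm_smul, norm_smul, norm_mul, norm_mul]
  have h1 := norm_inner_le_norm (𝕜 := ℝ) (v - v') w
  have h2 := norm_inner_le_norm (𝕜 := ℝ) v' w
  have h3 : ‖‖v‖ ^ 2 - ‖v'‖ ^ 2‖ ≤ 4 * ‖v - v'‖ := by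
    have : ‖v‖ ^ 2 - ‖v'‖ ^ 2 = (‖v‖ + ‖v'‖) * (‖v‖ - ‖v'‖) := by ring
    rw [this, norm_mul, Real.norm_eq_abs, Real.norm_eq_abs, abs_of_nonneg (by positivity)]
    have := abs_norm_sub_norm_le v v'
    gcongr
    linarith
  have h4 : ‖⟪v - v', w⟫‖ ≤ 3 * ‖v - v'‖ := by nlinarith [norm_nonneg (v - v')]
  have h5 : ‖⟪v', w⟫‖ ≤ 6 := by nlinarith [norm_nonneg v', norm_nonneg w]
  have h6 : ‖‖v‖ ^ 2 - ‖v'‖ ^ 2‖ * ‖w‖ ≤ (4 * ‖v - v'‖) * 3 := by gcongr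
  have h7 : ‖(2 : ℝ)‖ * ‖⟪v - v', w⟫‖ * ‖v‖ ≤ 2 * (3 * ‖v - v'‖) * 2 := by
    rw [Real.norm_ofNat]; gcongr
  have h8 : ‖(2 : ℝ)‖ * ‖⟪v', w⟫‖ * ‖v - v'‖ ≤ 2 * 6 * ‖v - v'‖ := by
    rw [Real.norm_ofNat]; gcongr
  linarith

open scoped RealInnerProductSpace in
/-- Every point near `u` is the image of `u` under a scaled product of two reflections. -/
lemma exists_scaledReflection_eq {n : ℕ} {e u y : En n} {c ε : ℝ} (hc : 0 < c) (he : ‖e‖ = 1)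
    (hu : c ≤ |⟪e, u⟫|) (hε : 2 * ε ≤ c) (hy : ‖y - u‖ < ε) :
    ∃ v : En n, ‖v - e‖ < 4 / c * ε ∧ scaledReflection v (hyperplaneReflection e u) = y := by
  set w := hyperplaneReflection e u with hw
  have hwn : ‖w‖ = ‖u‖ := (hyperplaneReflection e).norm_map u
  have hε0 : 0 < ε := (norm_nonneg _).trans_lt hy
  have huc : c ≤ ‖u‖ := by
    have := norm_inner_le_norm (𝕜 := ℝ) e u
    rw [he, one_mul, Real.norm_eq_abs] at this
    linarith
  have hu0 : 0 < ‖u‖ := hc.trans_le huc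
  have hyu : |‖y‖ - ‖u‖| < ε := (abs_norm_sub_norm_le _ _).trans_lt hy
  have hy0 : 0 < ‖y‖ := by
    have := (abs_lt.1 hyu).1
    linarith
  have hwu : u - w = (2 * ⟪e, u⟫) • e := by
    rw [hw, hyperplaneReflection_apply, he]; simp
  obtain ⟨σ, hσ, hσu⟩ : ∃ σ : ℝ, |σ| = 1 ∧ ⟪e, u⟫ = σ * |⟪e, u⟫| := by
    rcases le_or_gt 0 ⟪e, u⟫ with h | h
    · exact ⟨1, by simp, by rw [abs_of_nonneg h, one_mul]⟩
    · exact ⟨-1, by simp, by rw [abs_of_neg h]; ring⟩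
  have hσ2 : σ * σ = 1 := by rw [← abs_mul_abs_self, hσ, one_mul]
  have hm : 0 < |⟪e, u⟫| := hc.trans_le hu
  have hnuw : ‖u - w‖ = 2 * |⟪e, u⟫| := by
    rw [hwu, norm_smul, he, mul_one, Real.norm_eq_abs, abs_mul, abs_two]
  have huw0 : u - w ≠ 0 := by rw [← norm_ne_zero_iff, hnuw]; positivity
  have hee : e = σ • (‖u - w‖⁻¹ • (u - w)) := by
    rw [hnuw, hwu, smul_smul, smul_smul]
    have : σ * (2 * |⟪e, u⟫|)⁻¹ * (2 * ⟪e, u⟫) = 1 := by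
      conv_lhs => rw [hσu]
      rw [abs_mul, hσ, abs_abs, one_mul]
      field_simp
      linarith
    rw [this, one_smul]
  set y' := (‖u‖ / ‖y‖) • y with hy'
  have hy'n : ‖y'‖ = ‖u‖ := by
    rw [hy', norm_smul, norm_div, norm_norm, norm_norm]; field_simp
  have hy'y : ‖y' - y‖ < ε := by
    have : y' - y = ((‖u‖ - ‖y‖) / ‖y‖) • y := by
      rw [hy', sub_div, div_self hy0.ne', sub_smul, one_smul]
    rw [this, norm_smul, norm_div, norm_norm, Real.norm_eq_abs, abs_sub_comm]
    field_simp
    exact hyu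
  have hy'u : ‖y' - u‖ < 2 * ε := by
    have := norm_sub_le_norm_sub_add_norm_sub y' y u
    linarith
  have hq0 : y' - w ≠ 0 := by
    intro h
    have h1 : u - w = -(y' - u) := by
      rw [sub_eq_zero.1 h]; abel
    have : ‖u - w‖ = ‖y' - u‖ := by rw [h1, norm_neg]
    rw [hnuw] at this
    linarith
  set t := Real.sqrt (‖y‖ / ‖u‖) with ht
  have ht0 : 0 < t := Real.sqrt_pos.2 (by positivity)
  have ht2 : t ^ 2 = ‖y‖ / ‖u‖ := Real.sq_sqrt (by positivity)
  have ht1 : |t - 1| < ε / c := by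
    have h1 : |t - 1| * (t + 1) = |‖y‖ - ‖u‖| / ‖u‖ := by
      rw [← abs_of_pos (show 0 < t + 1 by positivity), ← abs_mul,
        show (t - 1) * (t + 1) = t ^ 2 - 1 by ring, ht2, ← abs_of_pos hu0, ← abs_div,
        abs_of_pos hu0]
      congr 1
      field_simp
    have h2 : |t - 1| ≤ |t - 1| * (t + 1) := by nlinarith [abs_nonneg (t - 1)]
    calc |t - 1| ≤ |‖y‖ - ‖u‖| / ‖u‖ := h1 ▸ h2
      _ < ε / ‖u‖ := by gcongr
      _ ≤ ε / c := by gcongr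
  have hqn : ‖y' - w‖ ≠ 0 := norm_ne_zero_iff.2 hq0
  set v := t • (σ • (‖y' - w‖⁻¹ • (y' - w))) with hv
  refine ⟨v, ?_, ?_⟩
  · have h1 : v - e = (t - 1) • (σ • (‖y' - w‖⁻¹ • (y' - w)))
        + σ • (‖y' - w‖⁻¹ • (y' - w) - ‖u - w‖⁻¹ • (u - w)) := by
      rw [smul_sub σ, ← hee, sub_smul, one_smul, hv]; abel
    have h2 := norm_inv_smul_sub_le hq0 huw0
    rw [sub_sub_sub_cancel_right, hnuw] at h2
    have h3 : 2 * ‖y' - u‖ / (2 * |⟪e, u⟫|) < 2 * (2 * ε) / (2 * c) := by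
      rw [div_lt_div_iff₀ (by positivity) (by positivity)]
      nlinarith
    rw [h1]
    refine (norm_add_le _ _).trans_lt ?_
    rw [norm_smul, norm_smul, norm_smul, norm_smul σ, Real.norm_eq_abs σ, hσ, norm_inv,
      norm_norm, inv_mul_cancel₀ hqn, mul_one, mul_one, one_mul, Real.norm_eq_abs, hnuw]
    have h4 : 4 / c * ε = ε / c + 3 * (ε / c) := by ring
    have h5 : 2 * (2 * ε) / (2 * c) = 2 * (ε / c) := by field_simp
    have h6 : 0 < ε / c := by positivity
    linarith
  · have hvq : v = (t * σ * ‖y' - w‖⁻¹) • (y' - w) := by rw [hv, smul_smul, smul_smul]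
    have hvn : ‖v‖ ^ 2 = ‖y‖ / ‖u‖ := by
      rw [hv, norm_smul, norm_smul, norm_smul, Real.norm_eq_abs σ, hσ, norm_inv, norm_norm,
        inv_mul_cancel₀ hqn, mul_one, mul_one, Real.norm_eq_abs, sq_abs, ht2]
    have hin : 2 * ⟪y' - w, w⟫ = -‖y' - w‖ ^ 2 := by
      rw [inner_sub_left, real_inner_self_eq_norm_sq, norm_sub_sq_real, hy'n, hwn]
      ring
    rw [scaledReflection, hvn]
    conv_lhs => rw [hvq, real_inner_smul_left, smul_smul]
    have h1 : 2 * (t * σ * ‖y' - w‖⁻¹ * ⟪y' - w, w⟫) * (t * σ * ‖y' - w‖⁻¹) = -(‖y‖ / ‖u‖) := by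
      calc _ = t ^ 2 * (σ * σ) * (‖y' - w‖⁻¹) ^ 2 * (2 * ⟪y' - w, w⟫) := by ring
        _ = _ := by rw [hin, ht2, hσ2]; field_simp
    rw [h1, neg_smul, sub_neg_eq_add, ← smul_add, add_sub_cancel, hy', smul_smul]
    field_simp
    simp
lemma volume_image_le_of_lipschitzOnWith {n : ℕ} {K : NNReal} {Φ : En n → En n} {P : Set (En n)}
    (h : LipschitzOnWith K Φ P) :
    (volume : Measure (En n)) (Φ '' P) ≤ (K : ℝ≥0∞) ^ n * volume P := by
  have hH := h.hausdorffMeasure_image_le (d := (n : ℝ)) (by positivity)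
  rw [ENNReal.rpow_natCast] at hH
  rw [← EuclideanSpace.euclideanHausdorffMeasure_eq_volume,
    Measure.euclideanHausdorffMeasure_def, Measure.smul_apply, Measure.smul_apply,
    ENNReal.smul_def, ENNReal.smul_def, smul_eq_mul, smul_eq_mul, mul_left_comm]
  exact mul_le_mul_right hH _

lemma measurableSet_le_abs_inner_and_norm_lt {n : ℕ} (e : En n) (c R : ℝ) :
    MeasurableSet {u : En n | c ≤ |inner ℝ e u| ∧ ‖u‖ < R} := by
  have h1 : MeasurableSet {u : En n | c ≤ |inner ℝ e u|} :=
    measurableSet_le measurable_const (by fun_prop)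
  have h2 : MeasurableSet {u : En n | ‖u‖ < R} :=
    measurableSet_lt (by fun_prop) measurable_const
  exact h1.inter h2

lemma setLIntegral_le_of_subset_image {n : ℕ} {K : NNReal} {Φ : En n → En n} (hΦ : Measurable Φ)
    {P T : Set (En n)} (h : LipschitzOnWith K Φ P) (hT : T ⊆ Φ '' P)
    {F : En n → ℝ≥0∞} (hF : Measurable F) :
    ∫⁻ y in T, F y ≤ (K : ℝ≥0∞) ^ n * ∫⁻ v in P, F (Φ v) := by
  have hle : (volume : Measure (En n)).restrict T
      ≤ (K : ℝ≥0∞) ^ n • Measure.map Φ (volume.restrict P) := by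
    refine Measure.le_iff.2 fun E hE => ?_
    rw [Measure.restrict_apply hE, Measure.smul_apply, Measure.map_apply hΦ hE,
      Measure.restrict_apply (hΦ hE), smul_eq_mul]
    refine (measure_mono ?_).trans
      (volume_image_le_of_lipschitzOnWith (h.mono (inter_subset_right (s := Φ ⁻¹' E))))
    rintro y ⟨hyE, hyT⟩
    obtain ⟨v, hv, rfl⟩ := hT hyT
    exact ⟨v, ⟨hyE, hv⟩, rfl⟩
  calc ∫⁻ y in T, F y ≤ ∫⁻ y, F y ∂((K : ℝ≥0∞) ^ n • Measure.map Φ (volume.restrict P)) :=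
        lintegral_mono' hle le_rfl
    _ = _ := by rw [lintegral_smul_measure, lintegral_map hF hΦ, smul_eq_mul]

open scoped RealInnerProductSpace in
/-- Averaging over small rotations: near the axis `e`, the integral of a kernel over pairs of
nearby points is controlled by its integrals along the graphs of small rotations. -/
lemma lintegral_near_diagonal_le {n : ℕ} {e : En n} (he : ‖e‖ = 1) {c ε δ : ℝ} (hc : 0 < c)
    (hε : 2 * ε ≤ c) (hε1 : 4 / c * ε ≤ 1) (hεδ : 8 * (4 / c * ε) ≤ δ)
    {G : En n → En n → ℝ≥0∞} (hG : Measurable (Function.uncurry G))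
    (hGhom : ∀ u y : En n, ∀ t : ℝ, 0 < t → G u (t • y) = G u y) {M : ℝ≥0∞}
    (hM : ∀ ρ : En n ≃ₗᵢ[ℝ] En n, IsRotation ρ → rotNorm ρ < δ →
      ∫⁻ u in ball (0 : En n) 3, G u (ρ u) ≤ M) :
    ∫⁻ u in {u : En n | c ≤ |⟪e, u⟫| ∧ ‖u‖ < 3}, ∫⁻ y in ball u ε, G u y
      ≤ 36 ^ n * (volume (ball e (4 / c * ε)) * M) := by
  have he0 : e ≠ 0 := by rintro rfl; simp at he
  set U := {u : En n | c ≤ |⟪e, u⟫| ∧ ‖u‖ < 3} with hUdef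
  have hU : MeasurableSet U := measurableSet_le_abs_inner_and_norm_lt e c 3
  set B := ball e (4 / c * ε) with hB
  have hv0 : ∀ v ∈ B, v ≠ 0 := by
    rintro v hv rfl
    rw [hB, mem_ball, dist_eq_norm, zero_sub, norm_neg, he] at hv
    linarith
  have hv2 : ∀ v ∈ B, ‖v‖ ≤ 2 := by
    intro v hv
    rw [hB, mem_ball, dist_eq_norm] at hv
    have := norm_le_norm_add_norm_sub' v e
    rw [he] at this
    linarith
  have hmeas : Measurable (fun p : En n × En n =>
      G p.1 (scaledReflection p.2 (hyperplaneReflection e p.1))) := by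
    have h2 : Continuous fun p : En n × En n => (p.2, hyperplaneReflection e p.1) := by fun_prop
    have h3 : Measurable fun p : En n × En n =>
        scaledReflection p.2 (hyperplaneReflection e p.1) :=
      (continuous_scaledReflection.comp h2).measurable
    have h : Measurable fun p : En n × En n =>
        (p.1, scaledReflection p.2 (hyperplaneReflection e p.1)) := measurable_fst.prodMk h3
    exact hG.comp h
  have h1 : ∀ u ∈ U, ∫⁻ y in ball u ε, G u y ≤ 36 ^ n *
      ∫⁻ v in B, G u (scaledReflection v (hyperplaneReflection e u)) := by
    intro u hu
    have := setLIntegral_le_of_subset_image (K := 36) (P := B) (T := ball u ε)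
      (Φ := fun v => scaledReflection v (hyperplaneReflection e u)) (F := G u)
      (continuous_scaledReflection.comp (by fun_prop : Continuous fun v : En n =>
        (v, hyperplaneReflection e u))).measurable
      (LipschitzOnWith.of_dist_le_mul fun v hv v' hv' => by
        rw [dist_eq_norm, dist_eq_norm]
        exact norm_scaledReflection_sub_le (hv2 v hv) (hv2 v' hv')
          (by rw [LinearIsometryEquiv.norm_map]; exact hu.2.le))
      (fun y hy => by
        obtain ⟨v, hv, hvy⟩ := exists_scaledReflection_eq hc he hu.1 hε
          (by rwa [mem_ball, dist_eq_norm] at hy)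
        exact ⟨v, by rwa [hB, mem_ball, dist_eq_norm], hvy⟩)
      (hG.comp (measurable_const.prodMk measurable_id))
    simpa using this
  have h2 : ∀ v ∈ B, ∫⁻ u in U, G u (scaledReflection v (hyperplaneReflection e u)) ≤ M := by
    intro v hv
    have hrot : rotNorm (reflectionRotation e v) < δ := by
      refine (rotNorm_reflectionRotation_le he (hv0 v hv)).trans_lt (lt_of_lt_of_le ?_ hεδ)
      rw [hB, mem_ball, dist_eq_norm] at hv
      linarith
    refine le_trans ?_ (hM _ (isRotation_reflectionRotation he0 (hv0 v hv)) hrot)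
    refine (lintegral_mono_set (t := ball (0 : En n) 3) fun u hu => by
      simpa using hu.2).trans (le_of_eq (lintegral_congr fun u => ?_))
    rw [scaledReflection_eq (hv0 v hv), hGhom _ _ _ (by have := hv0 v hv; positivity)]
    rfl
  calc ∫⁻ u in U, ∫⁻ y in ball u ε, G u y
      ≤ ∫⁻ u in U, 36 ^ n * ∫⁻ v in B, G u (scaledReflection v (hyperplaneReflection e u)) :=
        setLIntegral_mono' hU h1
    _ = 36 ^ n * ∫⁻ u in U, ∫⁻ v in B, G u (scaledReflection v (hyperplaneReflection e u)) :=
        lintegral_const_mul _ hmeas.lintegral_prod_right'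
    _ = 36 ^ n * ∫⁻ v in B, ∫⁻ u in U, G u (scaledReflection v (hyperplaneReflection e u)) := by
        rw [lintegral_lintegral_swap hmeas.aemeasurable]
    _ ≤ 36 ^ n * ∫⁻ _ in B, M := by
        gcongr 1
        exact setLIntegral_mono' measurableSet_ball h2
    _ = _ := by rw [setLIntegral_const, mul_comm M]

lemma setLIntegral_comp_add_right_le {n : ℕ} {P Q : Set (En n)} (hP : MeasurableSet P)
    (hQ : MeasurableSet Q) {κ : En n} (h : ∀ u ∈ P, u + κ ∈ Q) (F : En n → ℝ≥0∞) :
    ∫⁻ u in P, F (u + κ) ≤ ∫⁻ u in Q, F u := by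
  rw [← lintegral_indicator hP, ← lintegral_indicator hQ,
    ← lintegral_add_right_eq_self (fun u => Q.indicator F u) κ]
  refine lintegral_mono fun u => ?_
  by_cases hu : u ∈ P
  · simp [hu, h u hu]
  · simp [hu]

open scoped RealInnerProductSpace in
lemma lintegral_translate_near_axis_le {n : ℕ} (hn : n ≠ 0) {e : En n} (he : ‖e‖ = 1)
    {c δ : ℝ} {κ : En n} (hc : 0 < c) (hκ0 : κ ≠ 0)
    (hε : 2 * ‖κ‖ ≤ c) (hε1 : 4 / c * ‖κ‖ ≤ 1) (hεδ : 8 * (4 / c * ‖κ‖) ≤ δ)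
    {G G₀ : En n → En n → ℝ≥0∞} (hG : Measurable (Function.uncurry G))
    (hGhom : ∀ u y : En n, ∀ t : ℝ, 0 < t → G u (t • y) = G u y)
    (htri : ∀ u u' y, G₀ u u' ≤ G u y + G u' y) {M : ℝ≥0∞}
    (hM : ∀ ρ : En n ≃ₗᵢ[ℝ] En n, IsRotation ρ → rotNorm ρ < δ →
      ∫⁻ u in ball (0 : En n) 3, G u (ρ u) ≤ M)
    {P : Set (En n)} (hP : MeasurableSet P)
    (hP1 : ∀ u ∈ P, c ≤ |⟪e, u⟫| ∧ ‖u‖ < 3) (hP2 : ∀ u ∈ P, c ≤ |⟪e, u + κ⟫| ∧ ‖u + κ‖ < 3) :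
    ∫⁻ u in P, G₀ u (u + κ) ≤ 2 * (36 ^ n * (ENNReal.ofReal ((8 / c) ^ n) * M)) := by
  have : Nonempty (Fin n) := ⟨⟨0, Nat.pos_of_ne_zero hn⟩⟩
  have hκ : 0 < ‖κ‖ := norm_pos_iff.2 hκ0
  have hU : MeasurableSet {u : En n | c ≤ |⟪e, u⟫| ∧ ‖u‖ < 3} :=
    measurableSet_le_abs_inner_and_norm_lt e c 3
  set V := (volume : Measure (En n)) (ball 0 (‖κ‖ / 2)) with hV
  have hV0 : V ≠ 0 := (measure_ball_pos _ _ (by positivity)).ne'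
  have hVtop : V ≠ ⊤ := measure_ball_lt_top.ne
  have hVe : volume (ball e (4 / c * ‖κ‖)) = ENNReal.ofReal ((8 / c) ^ n) * V := by
    have := Measure.addHaar_ball_mul (volume : Measure (En n)) e (r := 8 / c) (by positivity)
      (‖κ‖ / 2)
    rw [finrank_euclideanSpace_fin] at this
    rw [← this]
    congr 2
    ring
  have hdiag := lintegral_near_diagonal_le he hc hε hε1 hεδ hG hGhom hM
  set I := ∫⁻ u in {u : En n | c ≤ |⟪e, u⟫| ∧ ‖u‖ < 3}, ∫⁻ y in ball u ‖κ‖, G u y with hI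
  have hmeasI : Measurable fun u : En n => ∫⁻ y in ball u ‖κ‖, G u y := by
    have h1 : (fun u : En n => ∫⁻ y in ball u ‖κ‖, G u y)
        = fun u => ∫⁻ y, {p : En n × En n | dist p.2 p.1 < ‖κ‖}.indicator
            (Function.uncurry G) (u, y) := by
      funext u
      rw [← lintegral_indicator measurableSet_ball]
      rfl
    rw [h1]
    exact (hG.indicator (measurableSet_lt (by fun_prop) measurable_const)).lintegral_prod_right'
  have hpt : ∀ u ∈ P, V * G₀ u (u + κ) ≤
      (∫⁻ y in ball u ‖κ‖, G u y) + ∫⁻ y in ball (u + κ) ‖κ‖, G (u + κ) y := by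
    intro u _
    have hVu : V = volume (ball (u + (2 : ℝ)⁻¹ • κ) (‖κ‖ / 2)) :=
      (Measure.addHaar_ball_center _ _ _).symm
    have hκ2 : ‖(2 : ℝ)⁻¹ • κ‖ = ‖κ‖ / 2 := by rw [norm_smul]; norm_num; ring
    have hs1 : ball (u + (2 : ℝ)⁻¹ • κ) (‖κ‖ / 2) ⊆ ball u ‖κ‖ := by
      refine ball_subset_ball' ?_
      rw [dist_eq_norm, add_sub_cancel_left, hκ2]
      linarith
    have hs2 : ball (u + (2 : ℝ)⁻¹ • κ) (‖κ‖ / 2) ⊆ ball (u + κ) ‖κ‖ := by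
      refine ball_subset_ball' ?_
      have : u + (2 : ℝ)⁻¹ • κ - (u + κ) = -((2 : ℝ)⁻¹ • κ) := by module
      rw [dist_eq_norm, this, norm_neg, hκ2]
      linarith
    calc V * G₀ u (u + κ) = ∫⁻ _ in ball (u + (2 : ℝ)⁻¹ • κ) (‖κ‖ / 2), G₀ u (u + κ) := by
          rw [setLIntegral_const, hVu, mul_comm]
      _ ≤ ∫⁻ y in ball (u + (2 : ℝ)⁻¹ • κ) (‖κ‖ / 2), (G u y + G (u + κ) y) :=
          lintegral_mono fun y => htri _ _ _
      _ = (∫⁻ y in ball (u + (2 : ℝ)⁻¹ • κ) (‖κ‖ / 2), G u y) +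
            ∫⁻ y in ball (u + (2 : ℝ)⁻¹ • κ) (‖κ‖ / 2), G (u + κ) y :=
          lintegral_add_left (hG.comp (measurable_const.prodMk measurable_id)) _
      _ ≤ _ := add_le_add (lintegral_mono_set hs1) (lintegral_mono_set hs2)
  have hmul : V * ∫⁻ u in P, G₀ u (u + κ) ≤ 2 * I := by
    calc V * ∫⁻ u in P, G₀ u (u + κ) = ∫⁻ u in P, V * G₀ u (u + κ) :=
          (lintegral_const_mul' _ _ hVtop).symm
      _ ≤ ∫⁻ u in P, ((∫⁻ y in ball u ‖κ‖, G u y) +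
            ∫⁻ y in ball (u + κ) ‖κ‖, G (u + κ) y) := setLIntegral_mono' hP hpt
      _ = (∫⁻ u in P, ∫⁻ y in ball u ‖κ‖, G u y) +
            ∫⁻ u in P, ∫⁻ y in ball (u + κ) ‖κ‖, G (u + κ) y := lintegral_add_left hmeasI _
      _ ≤ I + I := add_le_add (lintegral_mono_set hP1)
          (setLIntegral_comp_add_right_le hP hU hP2 fun u => ∫⁻ y in ball u ‖κ‖, G u y)
      _ = 2 * I := (two_mul I).symm
  refine (ENNReal.mul_le_mul_iff_right hV0 hVtop).1 (hmul.trans ?_)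
  calc 2 * I ≤ 2 * (36 ^ n * (volume (ball e (4 / c * ‖κ‖)) * M)) := by gcongr
    _ = _ := by rw [hVe]; ring

/-- A kernel satisfying a quasi-triangle inequality has its integrals along small translations
controlled by its integrals along small rotations. -/
lemma exists_lintegral_translate_le {n : ℕ} (hn : n ≠ 0) :
    ∃ C : ℝ≥0∞, C ≠ ⊤ ∧ ∃ L : ℝ, 0 < L ∧ ∀ (κ : En n) (δ : ℝ), κ ≠ 0 → L * ‖κ‖ ≤ 1 → L * ‖κ‖ ≤ δ →
      ∀ G G₀ : En n → En n → ℝ≥0∞, Measurable (Function.uncurry G) →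
      (∀ u y : En n, ∀ t : ℝ, 0 < t → G u (t • y) = G u y) →
      (∀ u u' y, G₀ u u' ≤ G u y + G u' y) → ∀ M : ℝ≥0∞,
      (∀ ρ : En n ≃ₗᵢ[ℝ] En n, IsRotation ρ → rotNorm ρ < δ →
        ∫⁻ u in ball (0 : En n) 3, G u (ρ u) ≤ M) →
      ∫⁻ u in {u : En n | 3 / 4 ≤ ‖u‖ ∧ ‖u‖ ≤ 9 / 4}, G₀ u (u + κ) ≤ C * M := by
  have hn' : (0 : ℝ) < n := by exact_mod_cast Nat.pos_of_ne_zero hn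
  set c : ℝ := 1 / (2 * Real.sqrt n) with hc
  have hsn : 0 < Real.sqrt n := Real.sqrt_pos.2 hn'
  have hc0 : 0 < c := by positivity
  have hcn : c * Real.sqrt n = 1 / 2 := by rw [hc]; field_simp
  refine ⟨n * (2 * (36 ^ n * ENNReal.ofReal ((8 / c) ^ n))), ?_, 32 / c + 4, by positivity, ?_⟩
  · finiteness
  intro κ δ hκ0 hκ1 hκδ G G₀ hG hGhom htri M hM
  have hκ : 0 < ‖κ‖ := norm_pos_iff.2 hκ0
  have hL : (32 / c + 4) * ‖κ‖ = 8 * (4 / c * ‖κ‖) + 4 * ‖κ‖ := by ring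
  have h4c : 0 < 4 / c * ‖κ‖ := by positivity
  have hκc : 32 * ‖κ‖ ≤ c := by
    have h1 : 32 / c * ‖κ‖ ≤ 1 := by linarith
    rw [div_mul_eq_mul_div, div_le_one hc0] at h1
    exact h1
  set S : Fin n → Set (En n) := fun i =>
    {u : En n | 3 / 2 * c ≤ |u i| ∧ ‖u‖ ≤ 9 / 4} with hS
  have hSm : ∀ i, MeasurableSet (S i) := by
    intro i
    have h1 : MeasurableSet {u : En n | 3 / 2 * c ≤ |u i|} :=
      measurableSet_le measurable_const (by fun_prop)
    have h2 : MeasurableSet {u : En n | ‖u‖ ≤ 9 / 4} :=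
      measurableSet_le (by fun_prop) measurable_const
    exact h1.inter h2
  have hcover : {u : En n | 3 / 4 ≤ ‖u‖ ∧ ‖u‖ ≤ 9 / 4} ⊆ ⋃ i, S i := by
    rintro u ⟨hu1, hu2⟩
    by_contra hcon
    have hlt : ∀ i, |u i| < 3 / 2 * c := by
      intro i
      by_contra hi
      exact hcon (mem_iUnion.2 ⟨i, not_lt.1 hi, hu2⟩)
    have hsq : ‖u‖ ^ 2 < (3 / 4) ^ 2 := by
      rw [EuclideanSpace.norm_sq_eq]
      calc ∑ i, ‖u i‖ ^ 2 < ∑ _i : Fin n, (3 / 2 * c) ^ 2 := by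
            refine Finset.sum_lt_sum_of_nonempty
              ⟨⟨0, Nat.pos_of_ne_zero hn⟩, Finset.mem_univ _⟩ fun i _ => ?_
            rw [Real.norm_eq_abs]
            have := hlt i
            gcongr
        _ = (3 / 2) ^ 2 * (c * Real.sqrt n) ^ 2 := by
            rw [mul_pow c, Real.sq_sqrt hn'.le]
            simp
            ring
        _ = _ := by rw [hcn]; norm_num
    nlinarith
  have hpiece : ∀ i, ∫⁻ u in S i, G₀ u (u + κ)
      ≤ 2 * (36 ^ n * (ENNReal.ofReal ((8 / c) ^ n) * M)) := by
    intro i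
    have hcoord : ∀ u : En n, inner ℝ (EuclideanSpace.single i (1 : ℝ)) u = u i := by
      intro u
      rw [EuclideanSpace.inner_single_left]
      simp
    have hκi : |κ i| ≤ ‖κ‖ := by simpa using PiLp.norm_apply_le κ i
    refine lintegral_translate_near_axis_le (e := EuclideanSpace.single i (1 : ℝ)) hn (by simp)
      hc0 hκ0 (by linarith) (by linarith) (by linarith) hG hGhom htri hM (hSm i) ?_ ?_
    · rintro u ⟨h1, h2⟩
      rw [hcoord]
      exact ⟨by linarith, by linarith⟩
    · rintro u ⟨h1, h2⟩
      rw [hcoord, PiLp.add_apply]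
      have h3 := abs_sub_abs_le_abs_sub (u i) (-κ i)
      rw [abs_neg, sub_neg_eq_add] at h3
      exact ⟨by linarith, by linarith [norm_add_le u κ]⟩
  calc ∫⁻ u in {u : En n | 3 / 4 ≤ ‖u‖ ∧ ‖u‖ ≤ 9 / 4}, G₀ u (u + κ)
      ≤ ∫⁻ u in ⋃ i, S i, G₀ u (u + κ) := lintegral_mono_set hcover
    _ ≤ ∑' i, ∫⁻ u in S i, G₀ u (u + κ) := lintegral_iUnion_le _ _
    _ = ∑ i, ∫⁻ u in S i, G₀ u (u + κ) := tsum_fintype _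
    _ ≤ ∑ _i : Fin n, 2 * (36 ^ n * (ENNReal.ofReal ((8 / c) ^ n) * M)) :=
        Finset.sum_le_sum fun i _ => hpiece i
    _ = _ := by simp; ring
/-- Polar coordinates for the `L^s` norm of functions constant along rays. -/
lemma eLpNorm_ball_eq_eLpNorm_sphere {n : ℕ} (hn : n ≠ 0) {R : ℝ} (hR : 0 < R) (s : ℝ≥0∞)
    {f : En n → ℝ} (hf : Measurable f) (hhom : ∀ t : ℝ, 0 < t → ∀ x, f (t • x) = f x) :
    eLpNorm f s (volume.restrict (ball (0 : En n) R)) = ENNReal.ofReal (R ^ n / n) ^ (1 / s).toReal *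
      eLpNorm (fun x : sphere (0 : En n) 1 => f x) s (sphereMeasure n) := by
  have hnt : Nontrivial (En n) := by
    have : Nonempty (Fin n) := ⟨⟨0, Nat.pos_of_ne_zero hn⟩⟩
    infer_instance
  let ψ : ({0}ᶜ : Set (En n)) → En n := Subtype.val
  have hemb : MeasurableEmbedding ψ :=
    MeasurableEmbedding.subtype_coe (measurableSet_singleton _).compl
  set R' : Ioi (0 : ℝ) := ⟨R, hR⟩ with hR'
  set H := homeomorphUnitSphereProd (En n)
  set vr := Measure.volumeIoiPow (Module.finrank ℝ (En n) - 1)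
  have hvol : (volume : Measure (En n)) = Measure.map ψ (Measure.comap ψ volume) := by
    rw [hemb.map_comap, Subtype.range_coe, restrict_compl_singleton]
  have hpre : ψ ⁻¹' ball 0 R = H ⁻¹' (univ ×ˢ Iio R') := by
    ext x
    simp [ψ, H, hR', ← Subtype.coe_lt_coe]
  have hcomp : f ∘ ψ
      = (fun p : sphere (0 : En n) 1 × Ioi (0 : ℝ) => f p.1) ∘ H := by
    funext x
    have hx : 0 < ‖(x : En n)‖ := norm_pos_iff.2 x.2
    simp [ψ, H, hhom _ (inv_pos.2 hx)]
  have hvr : vr (Iio R') = ENNReal.ofReal (R ^ n / n) := by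
    rw [Measure.volumeIoiPow_apply_Iio, finrank_euclideanSpace_fin,
      Nat.sub_add_cancel (Nat.pos_of_ne_zero hn), Nat.cast_sub (Nat.pos_of_ne_zero hn)]
    simp [R']
  have hfs : Measurable fun x : sphere (0 : En n) 1 => f x := hf.comp measurable_subtype_coe
  rw [hvol, hemb.restrict_map, hemb.eLpNorm_map_measure, hpre, hcomp,
    eLpNorm_comp_measurePreserving (g := fun p : sphere (0 : En n) 1 × Ioi (0 : ℝ) => f p.1)
      (hfs.comp measurable_fst).aestronglyMeasurable
      ((Measure.measurePreserving_homeomorphUnitSphereProd volume).restrict_preimage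
        (MeasurableSet.univ.prod measurableSet_Iio)),
    ← Measure.prod_restrict, Measure.restrict_univ]
  change eLpNorm ((fun x : sphere (0 : En n) 1 => f x) ∘ Prod.fst) s _ = _
  rw [← eLpNorm_map_measure hfs.aestronglyMeasurable measurable_fst.aemeasurable,
    Measure.map_fst_prod, Measure.restrict_apply_univ, hvr, eLpNorm_smul_measure_of_ne_zero,
    smul_eq_mul]
  · rfl
  · simp only [ne_eq, ENNReal.ofReal_eq_zero, not_le]
    have : 0 < n := Nat.pos_of_ne_zero hn
    positivity
lemma HomZero.apply_smul {n : ℕ} {Ω : En n → ℝ} (h : HomZero Ω) {t : ℝ} (ht : 0 < t) (x : En n) :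
    Ω (t • x) = Ω x := by
  rcases eq_or_ne x 0 with rfl | hx
  · rw [smul_zero]
  · exact h t ht x hx

/-- The integral modulus of continuity with values in `ℝ≥0∞`. -/
def rotationModulus {n : ℕ} (s : ℝ≥0∞) (Ω : En n → ℝ) (δ : ℝ) : ℝ≥0∞ :=
  ⨆ ρ : {ρ : En n ≃ₗᵢ[ℝ] En n // IsRotation ρ ∧ rotNorm ρ < δ},
    eLpNorm (fun x : sphere (0 : En n) 1 => Ω (ρ.1 (x : En n)) - Ω (x : En n)) s
      (sphereMeasure n)

lemma rotationModulus_mono {n : ℕ} (s : ℝ≥0∞) (Ω : En n → ℝ) {δ δ' : ℝ} (h : δ ≤ δ') :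
    rotationModulus s Ω δ ≤ rotationModulus s Ω δ' :=
  iSup_le fun ρ => le_iSup
    (fun ρ : {ρ : En n ≃ₗᵢ[ℝ] En n // IsRotation ρ ∧ rotNorm ρ < δ'} =>
      eLpNorm (fun x : sphere (0 : En n) 1 => Ω (ρ.1 (x : En n)) - Ω (x : En n)) s
        (sphereMeasure n)) ⟨ρ.1, ρ.2.1, ρ.2.2.trans_le h⟩

/-- The factor relating `L^s` norms on a ball and on the sphere. -/
def radialFactor (n : ℕ) (R : ℝ) (s : ℝ≥0∞) : ℝ≥0∞ := ENNReal.ofReal (R ^ n / n) ^ (1 / s).toReal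

lemma radialFactor_ne_zero {n : ℕ} (hn : n ≠ 0) {R : ℝ} (hR : 0 < R) (s : ℝ≥0∞) :
    radialFactor n R s ≠ 0 := by
  have : 0 < n := Nat.pos_of_ne_zero hn
  have h : 0 < ENNReal.ofReal (R ^ n / n) := ENNReal.ofReal_pos.2 (by positivity)
  exact (ENNReal.rpow_pos h ENNReal.ofReal_ne_top).ne'

lemma radialFactor_ne_top (n : ℕ) (R : ℝ) (s : ℝ≥0∞) : radialFactor n R s ≠ ⊤ :=
  ENNReal.rpow_ne_top_of_nonneg ENNReal.toReal_nonneg ENNReal.ofReal_ne_top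

lemma measurable_comp_isometry_sub {n : ℕ} {Ω : En n → ℝ} (hΩm : Measurable Ω)
    (ρ : En n ≃ₗᵢ[ℝ] En n) : Measurable fun x => Ω (ρ x) - Ω x :=
  (hΩm.comp ρ.continuous.measurable).sub hΩm

lemma HomZero.eLpNorm_comp_isometry_sub_eq {n : ℕ} (hn : n ≠ 0) {R : ℝ} (hR : 0 < R) (s : ℝ≥0∞)
    {Ω : En n → ℝ} (hΩm : Measurable Ω) (hΩ : HomZero Ω) (ρ : En n ≃ₗᵢ[ℝ] En n) :
    eLpNorm (fun x => Ω (ρ x) - Ω x) s (volume.restrict (ball (0 : En n) R)) =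
      radialFactor n R s * eLpNorm
        (fun x : sphere (0 : En n) 1 => Ω (ρ (x : En n)) - Ω (x : En n)) s (sphereMeasure n) :=
  eLpNorm_ball_eq_eLpNorm_sphere hn hR s (measurable_comp_isometry_sub hΩm ρ) fun t ht x => by
    rw [map_smul, hΩ.apply_smul ht, hΩ.apply_smul ht]

lemma eLpNorm_comp_isometry {n : ℕ} (R : ℝ) (s : ℝ≥0∞) {Ω : En n → ℝ} (hΩm : Measurable Ω)
    (ρ : En n ≃ₗᵢ[ℝ] En n) :
    eLpNorm (fun x => Ω (ρ x)) s (volume.restrict (ball (0 : En n) R))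
      = eLpNorm Ω s (volume.restrict (ball (0 : En n) R)) := by
  have h := ρ.measurePreserving.restrict_preimage (measurableSet_ball (x := (0 : En n)) (ε := R))
  have hpre : ρ ⁻¹' ball (0 : En n) R = ball 0 R := by ext x; simp
  rw [hpre] at h
  exact eLpNorm_comp_measurePreserving hΩm.aestronglyMeasurable h

lemma rotationModulus_ne_top {n : ℕ} (hn : n ≠ 0) {s : ℝ≥0∞} (hs : 1 ≤ s) {Ω : En n → ℝ}
    (hΩm : Measurable Ω) (hΩ : HomZero Ω) (hΩs : sphereLpNorm s Ω ≠ ⊤) (δ : ℝ) :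
    rotationModulus s Ω δ ≠ ⊤ := by
  have hle : rotationModulus s Ω δ ≤ 2 * sphereLpNorm s Ω := by
    refine iSup_le fun ρ => ?_
    refine (ENNReal.mul_le_mul_iff_right (radialFactor_ne_zero hn one_pos s)
      (radialFactor_ne_top n 1 s)).1 ?_
    rw [← hΩ.eLpNorm_comp_isometry_sub_eq hn one_pos s hΩm]
    refine (eLpNorm_sub_le (f := fun x => Ω (ρ.1 x)) (g := Ω)
      (hΩm.comp ρ.1.continuous.measurable).aestronglyMeasurable
      hΩm.aestronglyMeasurable hs).trans ?_
    rw [eLpNorm_comp_isometry 1 s hΩm, eLpNorm_ball_eq_eLpNorm_sphere hn one_pos s hΩm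
      (fun t ht x => hΩ.apply_smul ht x), ← two_mul, mul_left_comm]
    rfl
  exact ne_top_of_le_ne_top (ENNReal.mul_ne_top (by simp) hΩs) hle

lemma modCont_mono {n : ℕ} (hn : n ≠ 0) {s : ℝ≥0∞} (hs : 1 ≤ s) {Ω : En n → ℝ}
    (hΩm : Measurable Ω) (hΩ : HomZero Ω) (hΩs : sphereLpNorm s Ω ≠ ⊤) : Monotone (modCont s Ω) :=
  fun _ δ' h => ENNReal.toReal_mono (rotationModulus_ne_top hn hs hΩm hΩ hΩs δ')
    (rotationModulus_mono s Ω h)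

lemma HomZero.eLpNorm_comp_rotation_sub_le {n : ℕ} (hn : n ≠ 0) {R : ℝ} (hR : 0 < R) (s : ℝ≥0∞)
    {Ω : En n → ℝ} (hΩm : Measurable Ω) (hΩ : HomZero Ω) {δ : ℝ} {ρ : En n ≃ₗᵢ[ℝ] En n}
    (hρ : IsRotation ρ) (hρδ : rotNorm ρ < δ) :
    eLpNorm (fun x => Ω (ρ x) - Ω x) s (volume.restrict (ball (0 : En n) R)) ≤
      radialFactor n R s * rotationModulus s Ω δ := by
  rw [hΩ.eLpNorm_comp_isometry_sub_eq hn hR s hΩm]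
  gcongr
  exact le_iSup (fun ρ : {ρ : En n ≃ₗᵢ[ℝ] En n // IsRotation ρ ∧ rotNorm ρ < δ} =>
      eLpNorm (fun x : sphere (0 : En n) 1 => Ω (ρ.1 (x : En n)) - Ω (x : En n)) s
        (sphereMeasure n)) ⟨ρ, hρ, hρδ⟩

lemma enorm_sub_le_add_enorm_sub (a b c : ℝ) : ‖b - a‖ₑ ≤ ‖c - a‖ₑ + ‖c - b‖ₑ := by
  have h : b - a = (c - a) - (c - b) := by ring
  rw [h]
  exact enorm_sub_le

lemma exists_eLpNorm_translate_le_of_ne_top {n : ℕ} (hn : n ≠ 0) {s : ℝ≥0∞} (hs : 1 ≤ s)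
    (hs' : s ≠ ⊤) :
    ∃ C : ℝ≥0∞, C ≠ ⊤ ∧ ∃ L : ℝ, 0 < L ∧ ∀ Ω : En n → ℝ, Measurable Ω → HomZero Ω →
      ∀ (κ : En n) (δ : ℝ), κ ≠ 0 → L * ‖κ‖ ≤ 1 → L * ‖κ‖ ≤ δ →
      eLpNorm (fun u => Ω (u + κ) - Ω u) s
        (volume.restrict {u : En n | 3 / 4 ≤ ‖u‖ ∧ ‖u‖ ≤ 9 / 4}) ≤ C * rotationModulus s Ω δ := by
  obtain ⟨C, hC, L, hL, h⟩ := exists_lintegral_translate_le hn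
  have hs0 : s ≠ 0 := (one_pos.trans_le hs).ne'
  set p := s.toReal with hp
  have hp1 : 1 ≤ p := by
    rw [hp, ← ENNReal.toReal_one]
    exact (ENNReal.toReal_le_toReal ENNReal.one_ne_top hs').2 hs
  have hp0 : 0 < p := one_pos.trans_le hp1
  have h2 : (2 : ℝ≥0∞) ^ (p - 1) ≠ ⊤ := ENNReal.rpow_ne_top_of_nonneg (by linarith) (by simp)
  refine ⟨(C * 2 ^ (p - 1)) ^ p⁻¹ * radialFactor n 3 s, ENNReal.mul_ne_top
    (ENNReal.rpow_ne_top_of_nonneg (by positivity) (ENNReal.mul_ne_top hC h2))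
    (radialFactor_ne_top n 3 s), L, hL, ?_⟩
  intro Ω hΩm hΩ κ δ hκ0 hκ1 hκδ
  have hG : Measurable (Function.uncurry fun u y : En n => 2 ^ (p - 1) * ‖Ω y - Ω u‖ₑ ^ p) := by
    have : Measurable fun q : En n × En n => Ω q.2 - Ω q.1 := by fun_prop
    exact (this.enorm.pow_const p).const_mul _
  have key := h κ δ hκ0 hκ1 hκδ (fun u y => 2 ^ (p - 1) * ‖Ω y - Ω u‖ₑ ^ p)
    (fun u u' => ‖Ω u' - Ω u‖ₑ ^ p) hG (fun u y t ht => by simp only [hΩ.apply_smul ht])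
    (fun u u' y => by
      rw [← mul_add]
      exact (ENNReal.rpow_le_rpow (enorm_sub_le_add_enorm_sub _ _ (Ω y)) hp0.le).trans
        (ENNReal.rpow_add_le_mul_rpow_add_rpow _ _ hp1))
    (2 ^ (p - 1) * (radialFactor n 3 s * rotationModulus s Ω δ) ^ p)
    (fun ρ hρ hρδ => by
      rw [lintegral_const_mul' _ _ h2]
      gcongr
      have := hΩ.eLpNorm_comp_rotation_sub_le hn three_pos s hΩm hρ hρδ
      rwa [eLpNorm_eq_lintegral_rpow_enorm_toReal hs0 hs', one_div,
        ENNReal.rpow_inv_le_iff hp0] at this)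
  rw [eLpNorm_eq_lintegral_rpow_enorm_toReal hs0 hs', one_div, ENNReal.rpow_inv_le_iff hp0]
  refine key.trans (le_of_eq ?_)
  rw [mul_assoc _ (radialFactor n 3 s),
    ENNReal.mul_rpow_of_nonneg ((C * 2 ^ (p - 1)) ^ p⁻¹) _ hp0.le,
    ← ENNReal.rpow_mul, inv_mul_cancel₀ hp0.ne', ENNReal.rpow_one, mul_assoc]

lemma exists_eLpNorm_translate_le_top {n : ℕ} (hn : n ≠ 0) :
    ∃ C : ℝ≥0∞, C ≠ ⊤ ∧ ∃ L : ℝ, 0 < L ∧ ∀ Ω : En n → ℝ, Measurable Ω → HomZero Ω →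
      ∀ (κ : En n) (δ : ℝ), κ ≠ 0 → L * ‖κ‖ ≤ 1 → L * ‖κ‖ ≤ δ →
      eLpNorm (fun u => Ω (u + κ) - Ω u) ⊤
        (volume.restrict {u : En n | 3 / 4 ≤ ‖u‖ ∧ ‖u‖ ≤ 9 / 4}) ≤ C * rotationModulus ⊤ Ω δ := by
  classical
  obtain ⟨C, hC, L, hL, h⟩ := exists_lintegral_translate_le hn
  refine ⟨2, by simp, L, hL, ?_⟩
  intro Ω hΩm hΩ κ δ hκ0 hκ1 hκδ
  set w := rotationModulus ⊤ Ω δ with hw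
  have hG : Measurable (Function.uncurry fun u y : En n =>
      if w < ‖Ω y - Ω u‖ₑ then (1 : ℝ≥0∞) else 0) := by
    have : Measurable fun q : En n × En n => Ω q.2 - Ω q.1 := by fun_prop
    exact Measurable.ite (measurableSet_lt measurable_const this.enorm) measurable_const
      measurable_const
  have key := h κ δ hκ0 hκ1 hκδ (fun u y => if w < ‖Ω y - Ω u‖ₑ then (1 : ℝ≥0∞) else 0)
    (fun u u' => if 2 * w < ‖Ω u' - Ω u‖ₑ then (1 : ℝ≥0∞) else 0) hG
    (fun u y t ht => by simp only [hΩ.apply_smul ht])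
    (fun u u' y => by
      by_cases h1 : w < ‖Ω y - Ω u‖ₑ
      · rw [if_pos h1]
        exact le_add_right (by split_ifs <;> simp)
      by_cases h2 : w < ‖Ω y - Ω u'‖ₑ
      · rw [if_pos h2]
        exact le_add_left (by split_ifs <;> simp)
      rw [if_neg]
      · exact zero_le
      · rw [not_lt] at h1 h2 ⊢
        rw [two_mul]
        exact (enorm_sub_le_add_enorm_sub _ _ (Ω y)).trans (add_le_add h1 h2))
    0
    (fun ρ hρ hρδ => by
      have := hΩ.eLpNorm_comp_rotation_sub_le hn three_pos ⊤ hΩm hρ hρδ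
      have hone : radialFactor n 3 ⊤ = 1 := by simp [radialFactor]
      rw [hone, one_mul, eLpNorm_exponent_top] at this
      refine le_of_eq (lintegral_eq_zero_of_ae_eq_zero ?_)
      filter_upwards [ae_le_eLpNormEssSup (f := fun x => Ω (ρ x) - Ω x)
        (μ := volume.restrict (ball (0 : En n) 3))] with u hu
      simp only [Pi.zero_apply, ite_eq_right_iff, one_ne_zero, imp_false, not_lt]
      exact hu.trans this)
  rw [mul_zero, nonpos_iff_eq_zero] at key
  have hm : Measurable fun u : En n => if 2 * w < ‖Ω (u + κ) - Ω u‖ₑ then (1 : ℝ≥0∞) else 0 := by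
    have : Measurable fun u : En n => Ω (u + κ) - Ω u := by fun_prop
    exact Measurable.ite (measurableSet_lt measurable_const this.enorm) measurable_const
      measurable_const
  rw [lintegral_eq_zero_iff hm] at key
  rw [eLpNorm_exponent_top]
  refine eLpNormEssSup_le_of_ae_enorm_bound ?_
  filter_upwards [key] with u hu
  simpa using hu

lemma exists_eLpNorm_translate_le {n : ℕ} (hn : n ≠ 0) {s : ℝ≥0∞} (hs : 1 ≤ s) :
    ∃ C : ℝ≥0∞, C ≠ ⊤ ∧ ∃ L : ℝ, 0 < L ∧ ∀ Ω : En n → ℝ, Measurable Ω → HomZero Ω →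
      ∀ (κ : En n) (δ : ℝ), κ ≠ 0 → L * ‖κ‖ ≤ 1 → L * ‖κ‖ ≤ δ →
      eLpNorm (fun u => Ω (u + κ) - Ω u) s
        (volume.restrict {u : En n | 3 / 4 ≤ ‖u‖ ∧ ‖u‖ ≤ 9 / 4}) ≤ C * rotationModulus s Ω δ := by
  rcases eq_or_ne s ⊤ with rfl | hs'
  · exact exists_eLpNorm_translate_le_top hn
  · exact exists_eLpNorm_translate_le_of_ne_top hn hs hs'
lemma eLpNorm_comp_add_right_restrict_le {n : ℕ} {f : En n → ℝ} (hf : Measurable f) (s : ℝ≥0∞)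
    {S T : Set (En n)} (hT : MeasurableSet T) {a : En n} (h : ∀ u ∈ S, u + a ∈ T) :
    eLpNorm (fun u => f (u + a)) s (volume.restrict S) ≤ eLpNorm f s (volume.restrict T) := by
  refine (eLpNorm_mono_measure _ (Measure.restrict_mono (fun u hu => h u hu : S ⊆ (· + a) ⁻¹' T)
    le_rfl)).trans (le_of_eq ?_)
  exact eLpNorm_comp_measurePreserving hf.aestronglyMeasurable
    ((measurePreserving_add_right volume a).restrict_preimage hT)

lemma exists_eLpNorm_sub_annulus_le {n : ℕ} (hn : n ≠ 0) {s : ℝ≥0∞} (hs : 1 ≤ s) :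
    ∃ C : ℝ≥0∞, C ≠ ⊤ ∧ ∀ Ω : En n → ℝ, Measurable Ω → HomZero Ω →
      ∀ η : En n, η ≠ 0 → ‖η‖ ≤ 1 / 4 →
      eLpNorm (fun u => Ω (u + η) - Ω u) s (volume.restrict (ball (0 : En n) 2 \ ball 0 1))
        ≤ C * rotationModulus s Ω (‖η‖ / 2) := by
  obtain ⟨C, hC, L, hL, h⟩ := exists_eLpNorm_translate_le hn hs
  set N : ℕ := ⌈2 * L⌉₊ + 1 with hN
  have hN0 : (0 : ℝ) < N := by positivity
  have hNL : 2 * L ≤ N := by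
    rw [hN]
    push_cast
    linarith [Nat.le_ceil (2 * L)]
  refine ⟨N * C, ENNReal.mul_ne_top (by simp) hC, ?_⟩
  intro Ω hΩm hΩ η hη0 hη
  have hηpos : 0 < ‖η‖ := norm_pos_iff.2 hη0
  set κ : En n := (N : ℝ)⁻¹ • η with hκ
  have hκn : ‖κ‖ = ‖η‖ / N := by
    rw [hκ, norm_smul, Real.norm_of_nonneg (by positivity), inv_mul_eq_div]
  have hLκ : L * ‖κ‖ ≤ ‖η‖ / 2 := by
    rw [hκn, mul_div_assoc', div_le_div_iff₀ hN0 two_pos]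
    nlinarith
  have hT : MeasurableSet {u : En n | 3 / 4 ≤ ‖u‖ ∧ ‖u‖ ≤ 9 / 4} := by
    have h1 : MeasurableSet {u : En n | 3 / 4 ≤ ‖u‖} :=
      measurableSet_le measurable_const (by fun_prop)
    have h2 : MeasurableSet {u : En n | ‖u‖ ≤ 9 / 4} :=
      measurableSet_le (by fun_prop) measurable_const
    exact h1.inter h2
  have hD : Measurable fun u => Ω (u + κ) - Ω u := by fun_prop
  have hterm : ∀ k ∈ Finset.range N,
      eLpNorm (fun u => Ω (u + (k : ℝ) • κ + κ) - Ω (u + (k : ℝ) • κ)) s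
        (volume.restrict (ball (0 : En n) 2 \ ball 0 1)) ≤ C * rotationModulus s Ω (‖η‖ / 2) := by
    intro k hk
    refine (eLpNorm_comp_add_right_restrict_le hD s hT ?_).trans
      (h Ω hΩm hΩ κ (‖η‖ / 2) (smul_ne_zero (by positivity) hη0) (by linarith) hLκ)
    rintro u ⟨hu2, hu1⟩
    rw [mem_ball, dist_zero_right] at hu1 hu2
    have hkN : (k : ℝ) ≤ N := by exact_mod_cast (Finset.mem_range.1 hk).le
    have hkκ : ‖(k : ℝ) • κ‖ ≤ 1 / 4 := by
      rw [norm_smul, Real.norm_of_nonneg (by positivity), hκn]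
      calc (k : ℝ) * (‖η‖ / N) ≤ N * (‖η‖ / N) := by gcongr
        _ = ‖η‖ := by field_simp
        _ ≤ _ := hη
    have h1 := norm_add_le u ((k : ℝ) • κ)
    have h2 := norm_sub_le (u + (k : ℝ) • κ) ((k : ℝ) • κ)
    rw [add_sub_cancel_right] at h2
    exact ⟨by linarith, by linarith⟩
  have htel : (fun u => Ω (u + η) - Ω u)
      = ∑ k ∈ Finset.range N, fun u => Ω (u + (k : ℝ) • κ + κ) - Ω (u + (k : ℝ) • κ) := by
    funext u
    have hsum := Finset.sum_range_sub (fun k : ℕ => Ω (u + (k : ℝ) • κ)) N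
    have hNκ : (N : ℝ) • κ = η := smul_inv_smul₀ hN0.ne' η
    rw [hNκ, Nat.cast_zero, zero_smul, add_zero] at hsum
    rw [Finset.sum_apply, ← hsum]
    refine Finset.sum_congr rfl fun k _ => ?_
    rw [Nat.cast_succ, add_smul, one_smul, add_assoc]
  rw [htel]
  refine (eLpNorm_sum_le (fun k _ => ?_) hs).trans ((Finset.sum_le_sum hterm).trans
    (le_of_eq ?_))
  · exact (by fun_prop : Measurable fun u =>
      Ω (u + (k : ℝ) • κ + κ) - Ω (u + (k : ℝ) • κ)).aestronglyMeasurable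
  · rw [Finset.sum_const, Finset.card_range, nsmul_eq_mul, mul_assoc]

lemma abs_rpow_sub_rpow_le {γ c a b : ℝ} (hγ : γ ≤ 1) (hc : 0 < c) (ha : c ≤ a) (hb : c ≤ b) :
    |a ^ γ - b ^ γ| ≤ |γ| * c ^ (γ - 1) * |a - b| := by
  have h := (convex_Ici c).norm_image_sub_le_of_norm_hasDerivWithin_le
    (f := fun x : ℝ => x ^ γ) (f' := fun x => γ * x ^ (γ - 1)) (C := |γ| * c ^ (γ - 1)) (x := b)
    (y := a)
    (fun x hx => (Real.hasDerivAt_rpow_const (Or.inl (hc.trans_le hx).ne')).hasDerivWithinAt)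
    (fun x hx => by
      have hx0 : 0 < x := hc.trans_le hx
      rw [norm_mul, Real.norm_eq_abs, Real.norm_of_nonneg (by positivity)]
      gcongr ?_ * ?_
      exact Real.rpow_le_rpow_of_nonpos hc hx (by linarith)) hb ha
  simpa using h

/-- The kernel difference at unit scale. -/
lemma exists_eLpNorm_kernel_sub_annulus_le {n : ℕ} (hn : n ≠ 0) {s : ℝ≥0∞} (hs : 1 ≤ s) {γ : ℝ}
    (hγ : γ ≤ 0) {Ω : En n → ℝ} (hΩm : Measurable Ω) (hΩ : HomZero Ω)
    (hΩs : sphereLpNorm s Ω ≠ ⊤) :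
    ∃ C : ℝ≥0∞, C ≠ ⊤ ∧ ∀ η : En n, η ≠ 0 → ‖η‖ ≤ 1 / 4 →
      eLpNorm (fun u => Ω (u + η) * ‖u + η‖ ^ γ - Ω u * ‖u‖ ^ γ) s
        (volume.restrict (ball (0 : En n) 2 \ ball 0 1))
        ≤ C * (ENNReal.ofReal ‖η‖ + rotationModulus s Ω (‖η‖ / 2)) := by
  obtain ⟨C, hC, h⟩ := exists_eLpNorm_sub_annulus_le (n := n) hn hs
  set A := ball (0 : En n) 2 \ ball 0 1 with hA
  have hAm : MeasurableSet A := measurableSet_ball.diff measurableSet_ball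
  set K : ℝ := |γ| * (3 / 4) ^ (γ - 1) with hK
  have hK0 : 0 ≤ K := by positivity
  set I := eLpNorm Ω s (volume.restrict (ball (0 : En n) 3)) with hI
  have hItop : I ≠ ⊤ := by
    rw [hI, eLpNorm_ball_eq_eLpNorm_sphere hn three_pos s hΩm (fun t ht x => hΩ.apply_smul ht x)]
    exact ENNReal.mul_ne_top (radialFactor_ne_top n 3 s) hΩs
  refine ⟨ENNReal.ofReal K * I + C, by finiteness, ?_⟩
  intro η hη0 hη
  have hbd : ∀ u ∈ A, 1 ≤ ‖u‖ ∧ ‖u‖ < 2 := by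
    rintro u ⟨hu2, hu1⟩
    rw [mem_ball, dist_zero_right] at hu1 hu2
    exact ⟨not_lt.1 hu1, hu2⟩
  have hsplit : (fun u => Ω (u + η) * ‖u + η‖ ^ γ - Ω u * ‖u‖ ^ γ)
      = (fun u => Ω (u + η) * (‖u + η‖ ^ γ - ‖u‖ ^ γ)) +
        fun u => (Ω (u + η) - Ω u) * ‖u‖ ^ γ := by
    funext u
    simp only [Pi.add_apply]
    ring
  have h1 : eLpNorm (fun u => Ω (u + η) * (‖u + η‖ ^ γ - ‖u‖ ^ γ)) s (volume.restrict A)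
      ≤ ENNReal.ofReal (K * ‖η‖) * I := by
    refine (eLpNorm_le_mul_eLpNorm_of_ae_le_mul (c := K * ‖η‖) (g := fun u => Ω (u + η))
      ((ae_restrict_iff' hAm).2 (ae_of_all _ fun u hu => ?_)) s).trans ?_
    · have hu' := norm_sub_le (u + η) η
      rw [add_sub_cancel_right] at hu'
      have hu := hbd u hu
      rw [norm_mul, mul_comm]
      gcongr
      rw [Real.norm_eq_abs]
      refine (abs_rpow_sub_rpow_le (c := 3 / 4) (by linarith) (by norm_num) (by linarith)
        (by linarith)).trans ?_
      gcongr
      simpa using abs_norm_sub_norm_le (u + η) u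
    · gcongr
      refine eLpNorm_comp_add_right_restrict_le hΩm s measurableSet_ball fun u hu => ?_
      rw [mem_ball, dist_zero_right]
      linarith [norm_add_le u η, (hbd u hu).2]
  have h2 : eLpNorm (fun u => (Ω (u + η) - Ω u) * ‖u‖ ^ γ) s (volume.restrict A)
      ≤ C * rotationModulus s Ω (‖η‖ / 2) := by
    refine (eLpNorm_mono_ae ((ae_restrict_iff' hAm).2 (ae_of_all _ fun u hu => ?_))).trans
      (h Ω hΩm hΩ η hη0 hη)
    rw [norm_mul]
    refine mul_le_of_le_one_right (norm_nonneg _) ?_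
    rw [Real.norm_of_nonneg (by positivity)]
    exact Real.rpow_le_one_of_one_le_of_nonpos (hbd u hu).1 hγ
  rw [hsplit]
  have hm1 : Measurable fun u => Ω (u + η) * (‖u + η‖ ^ γ - ‖u‖ ^ γ) := by fun_prop
  have hm2 : Measurable fun u => (Ω (u + η) - Ω u) * ‖u‖ ^ γ := by fun_prop
  refine (eLpNorm_add_le hm1.aestronglyMeasurable hm2.aestronglyMeasurable hs).trans
    ((add_le_add h1 h2).trans ?_)
  rw [ENNReal.ofReal_mul hK0, mul_right_comm, add_mul]
  gcongr
  · exact le_add_right le_rfl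
  · exact le_add_left le_rfl

lemma eLpNorm_annulus_scaling {n : ℕ} {R : ℝ} (hR : 0 < R) (x₀ : En n) (s : ℝ≥0∞)
    {F : En n → ℝ} (hF : Measurable F) :
    eLpNorm (fun z => F (R⁻¹ • (x₀ - z))) s (volume.restrict (ball x₀ (2 * R) \ ball x₀ R))
      = ENNReal.ofReal (R ^ n) ^ (1 / s).toReal *
        eLpNorm F s (volume.restrict (ball (0 : En n) 2 \ ball 0 1)) := by
  set φ : En n → En n := fun z => R⁻¹ • (x₀ - z) with hφ
  have hφm : Measurable φ := by fun_prop
  have hmap : Measure.map φ volume = ENNReal.ofReal (R ^ n) • volume := by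
    have h1 : φ = (fun y => R⁻¹ • y) ∘ fun z => x₀ - z := rfl
    rw [h1, ← Measure.map_map (by fun_prop) (by fun_prop),
      (volume.measurePreserving_sub_left x₀).map_eq,
      Measure.map_addHaar_smul volume (inv_ne_zero hR.ne'), finrank_euclideanSpace_fin]
    rw [inv_pow, inv_inv, abs_of_pos (by positivity)]
  have hA : MeasurableSet (ball (0 : En n) 2 \ ball 0 1) :=
    measurableSet_ball.diff measurableSet_ball
  have hpre : φ ⁻¹' (ball (0 : En n) 2 \ ball 0 1) = ball x₀ (2 * R) \ ball x₀ R := by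
    ext z
    have hz : ‖φ z‖ = dist z x₀ / R := by
      rw [hφ, norm_smul, norm_inv, Real.norm_of_nonneg hR.le, inv_mul_eq_div, dist_comm,
        dist_eq_norm]
    simp only [mem_preimage, mem_sdiff, mem_ball, dist_zero_right, hz, div_lt_iff₀ hR, one_mul]
  have hpos : ENNReal.ofReal (R ^ n) ≠ 0 := (ENNReal.ofReal_pos.2 (by positivity)).ne'
  have hsmul := eLpNorm_smul_measure_of_ne_zero hpos F s (volume.restrict (ball 0 2 \ ball 0 1))
  rw [smul_eq_mul] at hsmul
  rw [← hsmul, ← Measure.restrict_smul, ← hmap, Measure.restrict_map hφm hA, hpre,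
    eLpNorm_map_measure hF.aestronglyMeasurable hφm.aemeasurable]
  rfl

lemma le_mul_integral_of_monotone {g : ℝ → ℝ} (hg : Monotone g) (hg0 : ∀ t, 0 ≤ g t) {β : ℝ}
    (hβ : -1 ≤ β) (hint : IntegrableOn (fun δ => g δ / δ ^ (1 + β)) (Ioo 0 1)) {t : ℝ} (ht : 0 < t)
    (ht1 : 2 * t < 1) :
    g t ≤ 2 * (2 * t) ^ β * ∫ δ in t..(2 * t), g δ / δ ^ (1 + β) := by
  have hle : t ≤ 2 * t := by linarith
  have hi : IntervalIntegrable (fun δ => g δ / δ ^ (1 + β)) volume t (2 * t) := by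
    rw [intervalIntegrable_iff_integrableOn_Ioc_of_le hle]
    exact hint.mono_set fun δ hδ => ⟨ht.trans hδ.1, hδ.2.trans_lt ht1⟩
  have hmono : ∫ _ in t..(2 * t), g t / (2 * t) ^ (1 + β) ≤
      ∫ δ in t..(2 * t), g δ / δ ^ (1 + β) := by
    refine intervalIntegral.integral_mono_on hle (by simp) hi fun δ hδ => ?_
    have hδ0 : 0 < δ := ht.trans_le hδ.1
    have := hg0 δ
    gcongr
    · exact hg hδ.1
    · linarith
    · exact hδ.2
  rw [intervalIntegral.integral_const, smul_eq_mul] at hmono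
  have h2t : 0 < (2 * t) ^ β := by positivity
  calc g t = 2 * (2 * t) ^ β * ((2 * t - t) * (g t / (2 * t) ^ (1 + β))) := by
        rw [Real.rpow_add (by positivity), Real.rpow_one]
        field_simp
        ring
    _ ≤ _ := by gcongr
/-- (Kernel smoothness estimate on dyadic annuli, one-point version.) -/
theorem kernel_difference_dyadic_center {n : ℕ} (hn : 2 ≤ n)
    (α : ℝ) (hα0 : 0 < α) (hαn : α < n)
    (s : ℝ≥0∞) (hs1 : 1 < s)
    (β : ℝ) (hβ0 : 0 < β) (hβ1 : β ≤ 1)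
    (Ω : En n → ℝ) (hΩm : Measurable Ω) (hD : DiniCond s β Ω) :
    ∃ C > 0, ∀ (x₀ : En n) (r : ℝ), 0 < r → ∀ j : ℕ, 2 ≤ j →
      ∀ x ∈ ball x₀ r,
        (eLpNorm
            (fun z : En n =>
              Ω (x - z) * ‖x - z‖ ^ (α - (n : ℝ)) - Ω (x₀ - z) * ‖x₀ - z‖ ^ (α - (n : ℝ))) s
            (volume.restrict
              (ball x₀ ((2 : ℝ) ^ (j + 1) * r) \ ball x₀ ((2 : ℝ) ^ j * r)))).toReal
        ≤ C * ((2 : ℝ) ^ j * r) ^ ((n : ℝ) * (s⁻¹).toReal - ((n : ℝ) - α)) *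
            (1 / (2 : ℝ) ^ j +
              (1 / (2 : ℝ) ^ ((j : ℝ) * β)) *
                (∫ δ in (‖x - x₀‖ / ((2 : ℝ) ^ (j + 1) * r))..(‖x - x₀‖ / ((2 : ℝ) ^ j * r)),
                  modCont s Ω δ / δ ^ (1 + β))) := by
  obtain ⟨hΩ, hΩs, hint⟩ := hD
  have hn0 : n ≠ 0 := by omega
  have hs : 1 ≤ s := hs1.le
  set γ : ℝ := α - n with hγ
  have hγ0 : γ ≤ 0 := by linarith
  obtain ⟨C, hC, h⟩ := exists_eLpNorm_kernel_sub_annulus_le hn0 hs hγ0 hΩm hΩ hΩs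
  have hC0 : 0 ≤ C.toReal := ENNReal.toReal_nonneg
  refine ⟨2 * C.toReal + 1, by positivity, ?_⟩
  intro x₀ r hr j hj x hx
  set R : ℝ := 2 ^ j * r with hR
  have hR0 : 0 < R := by positivity
  have h2R : (2 : ℝ) ^ (j + 1) * r = 2 * R := by rw [hR]; ring
  rw [h2R]
  set e : ℝ := (n : ℝ) * (s⁻¹).toReal - ((n : ℝ) - α) with he
  have hI0 : 0 ≤ ∫ δ in (‖x - x₀‖ / (2 * R))..(‖x - x₀‖ / R), modCont s Ω δ / δ ^ (1 + β) := by
    have hle : ‖x - x₀‖ / (2 * R) ≤ ‖x - x₀‖ / R := by gcongr; linarith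
    refine intervalIntegral.integral_nonneg hle fun δ hδ => ?_
    have hδ0 : 0 ≤ δ := le_trans (by positivity) hδ.1
    exact div_nonneg ENNReal.toReal_nonneg (by positivity)
  rcases eq_or_ne x x₀ with rfl | hne
  · simp only [sub_self, eLpNorm_zero', ENNReal.toReal_zero]
    rw [sub_self] at hI0
    positivity
  set η : En n := R⁻¹ • (x - x₀) with hη
  have hη0 : η ≠ 0 := smul_ne_zero (inv_ne_zero hR0.ne') (sub_ne_zero.2 hne)
  have hηn : ‖η‖ = ‖x - x₀‖ / R := by
    rw [hη, norm_smul, norm_inv, Real.norm_of_nonneg hR0.le, inv_mul_eq_div]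
  have hηpos : 0 < ‖η‖ := norm_pos_iff.2 hη0
  have hηj : ‖η‖ ≤ 1 / 2 ^ j := by
    rw [mem_ball, dist_eq_norm] at hx
    rw [hηn, hR, div_le_div_iff₀ (by positivity) (by positivity)]
    nlinarith [show (0 : ℝ) < 2 ^ j by positivity]
  have hη4 : ‖η‖ ≤ 1 / 4 := by
    refine hηj.trans ?_
    have h4 : (2 : ℝ) ^ 2 ≤ 2 ^ j := pow_le_pow_right₀ one_le_two hj
    exact one_div_le_one_div_of_le (by norm_num) (by linarith)
  have hkernel : (fun z : En n => Ω (x - z) * ‖x - z‖ ^ γ - Ω (x₀ - z) * ‖x₀ - z‖ ^ γ) =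
      (R ^ γ) • fun z => (fun u => Ω (u + η) * ‖u + η‖ ^ γ - Ω u * ‖u‖ ^ γ) (R⁻¹ • (x₀ - z)) := by
    have hscale : ∀ u : En n,
        Ω u * ‖u‖ ^ γ = R ^ γ * (Ω (R⁻¹ • u) * ‖R⁻¹ • u‖ ^ γ) := by
      intro u
      rw [hΩ.apply_smul (inv_pos.2 hR0), norm_smul, Real.norm_of_nonneg (by positivity),
        Real.mul_rpow (by positivity) (norm_nonneg u), Real.inv_rpow hR0.le]
      have : R ^ γ ≠ 0 := (Real.rpow_pos_of_pos hR0 γ).ne'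
      field_simp
    funext z
    have hz : R⁻¹ • (x₀ - z) + η = R⁻¹ • (x - z) := by
      rw [hη, ← smul_add]
      congr 1
      abel
    simp only [Pi.smul_apply, smul_eq_mul]
    rw [hz, hscale (x - z), hscale (x₀ - z), mul_sub]
  have hFm : Measurable fun u : En n => Ω (u + η) * ‖u + η‖ ^ γ - Ω u * ‖u‖ ^ γ := by fun_prop
  have hw : rotationModulus s Ω (‖η‖ / 2) ≠ ⊤ := rotationModulus_ne_top hn0 hs hΩm hΩ hΩs _
  have hunit := ENNReal.toReal_mono (by finiteness) (h η hη0 hη4)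
  rw [ENNReal.toReal_mul, ENNReal.toReal_add ENNReal.ofReal_ne_top hw,
    ENNReal.toReal_ofReal (norm_nonneg η)] at hunit
  have hmod := le_mul_integral_of_monotone (modCont_mono hn0 hs hΩm hΩ hΩs)
    (fun _ => ENNReal.toReal_nonneg) (by linarith) hint (t := ‖η‖ / 2) (by positivity)
    (by linarith)
  have hlow : ‖η‖ / 2 = ‖x - x₀‖ / (2 * R) := by rw [hηn]; field_simp
  have hupp : 2 * (‖η‖ / 2) = ‖x - x₀‖ / R := by rw [← hηn]; ring
  set J := ∫ δ in (‖x - x₀‖ / (2 * R))..(‖x - x₀‖ / R), modCont s Ω δ / δ ^ (1 + β) with hJ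
  have hmod' : (rotationModulus s Ω (‖η‖ / 2)).toReal ≤ 2 * (1 / 2 ^ ((j : ℝ) * β) * J) := by
    have hpow : (2 * (‖η‖ / 2)) ^ β ≤ 1 / 2 ^ ((j : ℝ) * β) := by
      rw [Real.rpow_mul two_pos.le, Real.rpow_natCast, ← Real.one_rpow β,
        ← Real.div_rpow one_pos.le (by positivity)]
      exact Real.rpow_le_rpow (by positivity) (by linarith) hβ0.le
    rw [hupp] at hmod hpow
    nth_rewrite 2 [hlow] at hmod
    refine hmod.trans ?_
    rw [← mul_assoc 2 _ J]
    exact mul_le_mul_of_nonneg_right (mul_le_mul_of_nonneg_left hpow two_pos.le) hI0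
  have hexp : (ENNReal.ofReal (R ^ n) ^ (1 / s).toReal).toReal * R ^ γ = R ^ e := by
    rw [← ENNReal.toReal_rpow, ENNReal.toReal_ofReal (by positivity), ← Real.rpow_natCast,
      ← Real.rpow_mul hR0.le, ← Real.rpow_add hR0, one_div, he, hγ]
    congr 1
    ring
  rw [hkernel, eLpNorm_const_smul, eLpNorm_annulus_scaling hR0 x₀ s hFm, ENNReal.toReal_mul,
    ENNReal.toReal_mul, toReal_enorm, Real.norm_of_nonneg (Real.rpow_nonneg hR0.le γ), ← mul_assoc,
    mul_comm (R ^ γ), hexp, mul_comm (2 * C.toReal + 1), mul_assoc]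
  have hRe : 0 < R ^ e := Real.rpow_pos_of_pos hR0 e
  refine mul_le_mul_of_nonneg_left (hunit.trans ?_) hRe.le
  have hj0 : (0 : ℝ) ≤ 1 / 2 ^ j := by positivity
  have hJ0 : 0 ≤ 1 / (2 : ℝ) ^ ((j : ℝ) * β) * J := by positivity
  nlinarith
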